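/- With Λ' as above, let δ ∈ Λ' be any root, i.e. ⟨δ,δ⟩ = −2. Then δ_K − d₁ ∈ ℤ⁴ and δ_E − d₂ ∈ ℤ⁸; in particular Λ' = ℤδ + (ℤ⁴ ⊕ ℤ⁸). -/

import Mathlib

/-!
STATEMENT 5: With `Λ' = ℤ·(d₁,d₂) + (ℤ⁴ ⊕ ℤ⁸)` as in the context, for every
root `δ ∈ Λ'` (i.e. `⟨δ,δ⟩ = -2`) one has `δ_K − d₁ ∈ ℤ⁴` and
`δ_E − d₂ ∈ ℤ⁸`; in particular `Λ' = ℤδ + (ℤ⁴ ⊕ ℤ⁸)`.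
-/

noncomputable section
namespace Stmt5

/-- The bilinear form of K = U(2) ⊕ U(2) on ℚ⁴ (ℚ-bilinear extension):
Gram matrix has blocks [[0,2],[2,0]] and [[0,2],[2,0]]. -/
def bK (x y : Fin 4 → ℚ) : ℚ :=
  2 * (x 0 * y 1 + x 1 * y 0) + 2 * (x 2 * y 3 + x 3 * y 2)

/-- The bilinear form of E = E8(2) on ℚ⁸ (ℚ-bilinear extension):
Gram matrix is −2 times the E8 Cartan matrix. -/
def bE (x y : Fin 8 → ℚ) : ℚ :=
  ∑ i : Fin 8, ∑ j : Fin 8, x i * ((-2 * CartanMatrix.E₈ i j : ℤ) : ℚ) * y j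

/-- `x` lies in the lattice ℤ⁴ ⊂ ℚ⁴. -/
def isInt4 (x : Fin 4 → ℚ) : Prop := ∀ i, ∃ n : ℤ, x i = n

/-- `x` lies in the lattice ℤ⁸ ⊂ ℚ⁸. -/
def isInt8 (x : Fin 8 → ℚ) : Prop := ∀ i, ∃ n : ℤ, x i = n

/-- `x` lies in the dual lattice (1/2)ℤ⁴ ⊂ ℚ⁴ of K. -/
def isHalf4 (x : Fin 4 → ℚ) : Prop := ∀ i, ∃ n : ℤ, x i = n / 2

/-- `x` lies in the dual lattice (1/2)ℤ⁸ ⊂ ℚ⁸ of E. -/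
def isHalf8 (x : Fin 8 → ℚ) : Prop := ∀ i, ∃ n : ℤ, x i = n / 2

/-- The ambient space ℚ⁴ ⊕ ℚ⁸ of K ⊕ E. -/
abbrev V : Type := (Fin 4 → ℚ) × (Fin 8 → ℚ)

/-- The orthogonal direct sum form of K ⊕ E on ℚ⁴ ⊕ ℚ⁸. -/
def bV (x y : V) : ℚ := bK x.1 y.1 + bE x.2 y.2

/-- Membership in the lattice Λ' = ℤ·(d₁,d₂) + (ℤ⁴ ⊕ ℤ⁸) ⊂ ℚ⁴ ⊕ ℚ⁸. -/
def memL (d₁ : Fin 4 → ℚ) (d₂ : Fin 8 → ℚ) (x : V) : Prop :=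
  ∃ n : ℤ, isInt4 (x.1 - (n : ℚ) • d₁) ∧ isInt8 (x.2 - (n : ℚ) • d₂)

/-!
In `Λ'/(K ⊕ E)` the class of `d = (d₁, d₂)` has order at most two, so every element of `Λ'` outside
`K ⊕ E` is congruent to `d`. A root lies outside `K ⊕ E` because the forms of `U(2)` and `E₈(2)`
are twice even forms, so that norms in `K ⊕ E` are divisible by four.
-/

section Coset

variable {G : Type*} [AddCommGroup G] {M : AddSubgroup G} {d δ : G}

lemma mem_zmultiples_sup_iff {x : G} :
    x ∈ AddSubgroup.zmultiples d ⊔ M ↔ ∃ n : ℤ, x - n • d ∈ M := by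
  simp only [AddSubgroup.mem_sup, AddSubgroup.exists_mem_zmultiples]
  refine exists_congr fun n => ⟨?_, fun h => ⟨_, h, add_sub_cancel _ _⟩⟩
  rintro ⟨m, hm, rfl⟩
  rwa [add_sub_cancel_left]

lemma sub_mem_of_mem_zmultiples_sup (hd : (2 : ℤ) • d ∈ M)
    (hδ : δ ∈ AddSubgroup.zmultiples d ⊔ M) (hδM : δ ∉ M) : δ - d ∈ M := by
  obtain ⟨n, hn⟩ := mem_zmultiples_sup_iff.1 hδ
  have even_smul_mem (m : ℤ) : (2 * m) • d ∈ M := by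
    rw [mul_comm, mul_smul]
    exact M.zsmul_mem hd m
  obtain ⟨m, rfl | rfl⟩ := n.even_or_odd'
  · exact absurd (by simpa only [sub_add_cancel] using M.add_mem hn (even_smul_mem m)) hδM
  · rw [add_smul, one_smul, sub_add_eq_sub_sub_swap] at hn
    simpa only [sub_add_cancel] using M.add_mem hn (even_smul_mem m)

lemma zmultiples_sup_le_of_sub_mem (h : δ - d ∈ M) :
    AddSubgroup.zmultiples δ ⊔ M ≤ AddSubgroup.zmultiples d ⊔ M := by
  refine sup_le (AddSubgroup.zmultiples_le_of_mem ?_) le_sup_right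
  exact mem_zmultiples_sup_iff.2 ⟨1, by rwa [one_smul]⟩

lemma zmultiples_sup_eq_of_sub_mem (h : δ - d ∈ M) :
    AddSubgroup.zmultiples δ ⊔ M = AddSubgroup.zmultiples d ⊔ M :=
  le_antisymm (zmultiples_sup_le_of_sub_mem h)
    (zmultiples_sup_le_of_sub_mem ((AddSubgroup.sub_mem_comm_iff M).1 h))

end Coset

lemma even_dotProduct_mulVec_self {n : Type*} [Fintype n] {A : Matrix n n ℤ} (hA : A.IsSymm)
    (hdiag : ∀ i, Even (A i i)) (x : n → ℤ) : Even (x ⬝ᵥ A.mulVec x) := by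
  -- Modulo two the diagonal terms vanish and the off-diagonal ones cancel in pairs.
  rw [← ZMod.intCast_eq_zero_iff_even]
  simp only [dotProduct, Matrix.mulVec, Finset.mul_sum, ← Fintype.sum_prod_type', Int.cast_sum]
  refine Finset.sum_ninvolution Prod.swap ?cancel ?diag (fun _ => Finset.mem_univ _) Prod.swap_swap
  case cancel =>
    rintro ⟨i, j⟩
    have swap_term : x j * (A j i * x i) = x i * (A i j * x j) := by
      rw [hA.apply i j]
      ring
    rw [Prod.swap_prod_mk, swap_term, CharTwo.add_self_eq_zero]
  case diag =>
    rintro ⟨i, j⟩ hterm hswap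
    obtain rfl : j = i := congrArg Prod.fst hswap
    exact hterm (((hdiag j).mul_right _).mul_left _).intCast_zmod_two

/-- The lattice `ℤ^ι` in `ℚ^ι`. -/
def integralVectors (ι : Type*) : AddSubgroup (ι → ℚ) :=
  ((Int.castAddHom ℚ).compLeft ι).range

lemma mem_integralVectors {ι : Type*} {x : ι → ℚ} :
    x ∈ integralVectors ι ↔ ∀ i, ∃ n : ℤ, x i = n := by
  simp only [Classical.skolem, funext_iff, integralVectors, AddMonoidHom.mem_range,
    AddMonoidHom.compLeft_apply, Function.comp_apply, Int.coe_castAddHom, eq_comm]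

lemma two_zsmul_mem_integralVectors {ι : Type*} {x : ι → ℚ} (hx : ∀ i, ∃ n : ℤ, x i = n / 2) :
    (2 : ℤ) • x ∈ integralVectors ι := by
  refine mem_integralVectors.2 fun i => (hx i).imp fun n hn => ?_
  rw [Pi.smul_apply, hn, zsmul_eq_mul, Int.cast_ofNat, mul_div_cancel₀ _ two_ne_zero]

/-- The lattice `K ⊕ E` in `ℚ⁴ ⊕ ℚ⁸`. -/
def latticeKE : AddSubgroup V :=
  (integralVectors (Fin 4)).prod (integralVectors (Fin 8))

lemma mem_latticeKE {x : V} : x ∈ latticeKE ↔ isInt4 x.1 ∧ isInt8 x.2 :=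
  and_congr mem_integralVectors mem_integralVectors

lemma memL_iff {d₁ : Fin 4 → ℚ} {d₂ : Fin 8 → ℚ} {x : V} :
    memL d₁ d₂ x ↔ x ∈ AddSubgroup.zmultiples (d₁, d₂) ⊔ latticeKE := by
  simp only [memL, mem_zmultiples_sup_iff, mem_latticeKE, Prod.fst_sub, Prod.snd_sub,
    Prod.smul_fst, Prod.smul_snd, Int.cast_smul_eq_zsmul]

lemma exists_bK_self_eq_four_mul {x : Fin 4 → ℚ} (hx : x ∈ integralVectors (Fin 4)) :
    ∃ k : ℤ, bK x x = 4 * k := by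
  obtain ⟨a, rfl⟩ := hx
  refine ⟨a 0 * a 1 + a 2 * a 3, ?_⟩
  simp only [bK, AddMonoidHom.compLeft_apply, Function.comp_apply, Int.coe_castAddHom]
  push_cast
  ring

lemma exists_bE_self_eq_four_mul {x : Fin 8 → ℚ} (hx : x ∈ integralVectors (Fin 8)) :
    ∃ k : ℤ, bE x x = 4 * k := by
  obtain ⟨a, rfl⟩ := hx
  have even_diag (i : Fin 8) : Even (CartanMatrix.E₈ i i) := by
    rw [CartanMatrix.E₈_diag]
    exact even_two
  obtain ⟨k, hk⟩ := (even_dotProduct_mulVec_self CartanMatrix.E₈_isSymm even_diag a).two_dvd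
  have bE_eq : bE (Int.cast ∘ a) (Int.cast ∘ a) = -2 * (a ⬝ᵥ CartanMatrix.E₈.mulVec a : ℤ) := by
    simp only [bE, dotProduct, Matrix.mulVec, Function.comp_apply, Finset.mul_sum]
    push_cast
    simp only [Finset.mul_sum]
    exact Finset.sum_congr rfl fun i _ => Finset.sum_congr rfl fun j _ => by ring
  refine ⟨-k, ?_⟩
  rw [show (Int.castAddHom ℚ).compLeft (Fin 8) a = Int.cast ∘ a from rfl, bE_eq, hk]
  push_cast
  ring

lemma exists_bV_self_eq_four_mul {x : V} (hx : x ∈ latticeKE) : ∃ k : ℤ, bV x x = 4 * k := by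
  obtain ⟨k, hk⟩ := exists_bK_self_eq_four_mul hx.1
  obtain ⟨l, hl⟩ := exists_bE_self_eq_four_mul hx.2
  exact ⟨k + l, by rw [bV, hk, hl, Int.cast_add, mul_add]⟩

lemma notMem_latticeKE_of_root {δ : V} (hroot : bV δ δ = -2) : δ ∉ latticeKE := by
  intro hδ
  obtain ⟨k, hk⟩ := exists_bV_self_eq_four_mul hδ
  have : 4 * k = -2 := by exact_mod_cast hk.symm.trans hroot
  omega

theorem statement5_general (d₁ : Fin 4 → ℚ) (d₂ : Fin 8 → ℚ)
    (hd₁ : isHalf4 d₁) (hd₂ : isHalf8 d₂)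
    (δ : V) (hδ : memL d₁ d₂ δ) (hδKE : δ ∉ latticeKE) :
    isInt4 (δ.1 - d₁) ∧ isInt8 (δ.2 - d₂) ∧
    (∀ x : V, memL d₁ d₂ x ↔
      ∃ n : ℤ, isInt4 (x.1 - (n : ℚ) • δ.1) ∧ isInt8 (x.2 - (n : ℚ) • δ.2)) := by
  have two_smul_mem : (2 : ℤ) • ((d₁, d₂) : V) ∈ latticeKE :=
    ⟨two_zsmul_mem_integralVectors hd₁, two_zsmul_mem_integralVectors hd₂⟩
  have sub_mem : δ - (d₁, d₂) ∈ latticeKE :=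
    sub_mem_of_mem_zmultiples_sup two_smul_mem (memL_iff.1 hδ) hδKE
  obtain ⟨h₁, h₂⟩ := mem_latticeKE.1 sub_mem
  refine ⟨h₁, h₂, fun x => ?_⟩
  change memL d₁ d₂ x ↔ memL δ.1 δ.2 x
  rw [memL_iff, memL_iff, zmultiples_sup_eq_of_sub_mem sub_mem]

theorem statement5 (d₁ : Fin 4 → ℚ) (d₂ : Fin 8 → ℚ)
    (hd₁ : isHalf4 d₁) (hd₁' : ¬ isInt4 d₁)
    (hd₂ : isHalf8 d₂) (hd₂' : ¬ isInt8 d₂)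
    (heven : ∃ k : ℤ, bK d₁ d₁ + bE d₂ d₂ = 2 * k)
    (δ : V) (hδ : memL d₁ d₂ δ) (hroot : bV δ δ = -2) :
    isInt4 (δ.1 - d₁) ∧ isInt8 (δ.2 - d₂) ∧
    (∀ x : V, memL d₁ d₂ x ↔
      ∃ n : ℤ, isInt4 (x.1 - (n : ℚ) • δ.1) ∧ isInt8 (x.2 - (n : ℚ) • δ.2)) := by
  exact statement5_general d₁ d₂ hd₁ hd₂ δ hδ (notMem_latticeKE_of_root hroot)

end Stmt5
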